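/- arXiv:1703.02996 — 2 statements merged into one kernel-verified Lean document; each statement's English description precedes it below -/
import Mathlib

section
/- Let p be a prime number and let G be a finite p-group acting by additive automorphisms on a nontrivial finite abelian group M of exponent p (i.e., p • m = 0 for every m ∈ M). Then the group of coinvariants M_G = M/N is nontrivial, where N is the subgroup of M generated by all elements of the form g • m - m with g ∈ G and m ∈ M. -/
theorem aux_dual (p : ℕ) (hp : p.Prime) (M : Type) [AddCommGroup M] [Module (ZMod p) M]
    (x : M) (hx : x ≠ 0) : ∃ f : M →+ ZMod p, f x ≠ 0 := by
  have : Fact p.Prime := ⟨hp⟩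
  by_contra! h
  exact hx ((Module.forall_dual_apply_eq_zero_iff (ZMod p) x).1
    (fun f => h (LinearMap.toAddMonoidHom f)))

/-- **Lemma (coinvariants).** Let `p` be a prime and `G` a finite `p`-group acting by
additive automorphisms on a nontrivial finite abelian group `M` of exponent `p`.
Then the group of coinvariants `M_G = M ⧸ N` is nontrivial, where `N` is the subgroup
generated by the elements `g • m - m`. -/
theorem coinvariants_nontrivial
    (p : ℕ) (hp : p.Prime)
    (G : Type) [Group G] [Fintype G] (k : ℕ) (hG : Fintype.card G = p ^ k)
    (M : Type) [AddCommGroup M] [Fintype M] [Nontrivial M]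
    (hexp : ∀ m : M, p • m = 0)
    [DistribMulAction G M] :
    Nontrivial
      (M ⧸ AddSubgroup.closure {x : M | ∃ (g : G) (m : M), x = g • m - m}) := by
  classical
  have : Fact p.Prime := ⟨hp⟩
  letI : Module (ZMod p) M := AddCommGroup.zmodModule hexp
  letI act : MulAction G (M →+ ZMod p) :=
    { smul := fun g f => f.comp (DistribSMul.toAddMonoidHom M g⁻¹)
      one_smul := fun f => by
        ext m
        change f ((1 : G)⁻¹ • m) = f m
        simp
      mul_smul := fun g h f => by
        ext m
        change f ((g * h)⁻¹ • m) = f (h⁻¹ • g⁻¹ • m)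
        rw [mul_inv_rev, mul_smul] }
  have hsm : ∀ (g : G) (f : M →+ ZMod p) (m : M), (g • f) m = f (g⁻¹ • m) :=
    fun _ _ _ => rfl
  have hP : IsPGroup p G := IsPGroup.of_card (n := k) (by rw [Nat.card_eq_fintype_card, hG])
  have : Finite (M →+ ZMod p) := Finite.of_injective (fun f => (f : M → ZMod p)) DFunLike.coe_injective
  obtain ⟨x, hx⟩ := exists_ne (0 : M)
  obtain ⟨f, hf⟩ := aux_dual p hp M x hx
  have hdvd : p ∣ Nat.card (M →+ ZMod p) := by
    have h1 : addOrderOf f = p := by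
      apply addOrderOf_eq_prime
      · ext m
        simp
      · intro h
        exact hf (DFunLike.congr_fun h x)
    have h2 := addOrderOf_dvd_natCard f
    rwa [h1] at h2
  have h0 : (0 : M →+ ZMod p) ∈ MulAction.fixedPoints G (M →+ ZMod p) := by
    intro g
    ext m
    rw [hsm]
    rfl
  obtain ⟨b, hb, hb0⟩ := hP.exists_fixed_point_of_prime_dvd_card_of_fixed_point _ hdvd h0
  have hle : AddSubgroup.closure {x : M | ∃ (g : G) (m : M), x = g • m - m} ≤ b.ker := by
    rw [AddSubgroup.closure_le]
    rintro _ ⟨g, m, rfl⟩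
    have := DFunLike.congr_fun (hb g⁻¹) m
    rw [hsm, inv_inv] at this
    simp [AddMonoidHom.mem_ker, this]
  rw [QuotientAddGroup.nontrivial_iff]
  intro htop
  apply hb0
  ext m
  have : m ∈ b.ker := hle (htop ▸ AddSubgroup.mem_top m)
  exact this.symm
end

section
/- Let F be a free group (on an arbitrary generating set), let p be a prime, and let l ≥ 1 be a natural number. Suppose w, z ∈ F are such that w^{p^l} · z^p = u^p for some u ∈ F. Then z commutes with w. Equivalently, if z and w do not commute, then the element w^{p^l} · z^p is not a p-th power in F. -/
/-- The exponent-sum homomorphism with weights `t`. -/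
def expSum {X : Type} {p : ℕ} (t : X → ZMod p) : FreeGroup X →* Multiplicative (ZMod p) :=
  FreeGroup.lift fun x => Multiplicative.ofAdd (t x)

/-- Integer-free version of the exponent sum. -/
def eSum {X : Type} {p : ℕ} (t : X → ZMod p) (g : FreeGroup X) : ZMod p :=
  Multiplicative.toAdd (expSum t g)

theorem eSum_mul {X : Type} {p : ℕ} (t : X → ZMod p) (g h : FreeGroup X) :
    eSum t (g * h) = eSum t g + eSum t h := by simp [eSum]

theorem eSum_one {X : Type} {p : ℕ} (t : X → ZMod p) :
    eSum t (1 : FreeGroup X) = 0 := by simp [eSum]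

theorem eSum_inv {X : Type} {p : ℕ} (t : X → ZMod p) (g : FreeGroup X) :
    eSum t g⁻¹ = - eSum t g := by simp [eSum]

theorem eSum_of {X : Type} {p : ℕ} (t : X → ZMod p) (x : X) :
    eSum t (FreeGroup.of x) = t x := by simp [eSum, expSum]

theorem eSum_lin {X : Type} {p : ℕ} (t s : X → ZMod p) (c d : ZMod p) (g : FreeGroup X) :
    eSum (fun x => c * t x + d * s x) g = c * eSum t g + d * eSum s g := by
  induction g using FreeGroup.induction_on with
  | C1 => simp [eSum_one]
  | of x => simp [eSum_of]
  | inv_of x ih => simp only [eSum_inv, eSum_of]; ring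
  | mul a b ha hb => simp only [eSum_mul, ha, hb]; ring

/-- Elements of the wreath product as permutations. -/
def wrPerm {p : ℕ} (k : ZMod p) (f : ZMod p → ZMod p) : Equiv.Perm (ZMod p × ZMod p) where
  toFun q := (q.1 + k, q.2 + f q.1)
  invFun q := (q.1 - k, q.2 - f (q.1 - k))
  left_inv q := by simp
  right_inv q := by simp

theorem wr_rep {X : Type} {p : ℕ} [NeZero p] (t s : X → ZMod p) :
    ∃ ρ : FreeGroup X →* Equiv.Perm (ZMod p × ZMod p), ∀ g, ∃ f : ZMod p → ZMod p,
      ∑ i, f i = eSum s g ∧ ∀ q, ρ g q = (q.1 + eSum t g, q.2 + f q.1) := by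
  classical
  let ρ : FreeGroup X →* Equiv.Perm (ZMod p × ZMod p) :=
    FreeGroup.lift fun x => wrPerm (t x) (fun i => if i = 0 then s x else 0)
  have hinv : ∀ g, (∃ f : ZMod p → ZMod p,
      ∑ i, f i = eSum s g ∧ ∀ q, ρ g q = (q.1 + eSum t g, q.2 + f q.1)) →
      (∃ f : ZMod p → ZMod p,
      ∑ i, f i = eSum s g⁻¹ ∧ ∀ q, ρ g⁻¹ q = (q.1 + eSum t g⁻¹, q.2 + f q.1)) := by
    rintro g ⟨f, hf, hq⟩
    refine ⟨fun i => - f (i - eSum t g), ?_, fun q => ?_⟩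
    · rw [eSum_inv, ← hf, Finset.sum_neg_distrib]
      congr 1
      exact Equiv.sum_comp (Equiv.subRight (eSum t g)) f
    · rw [map_inv, Equiv.Perm.inv_eq_iff_eq, hq, eSum_inv]
      ext <;> simp [sub_eq_add_neg]
  refine ⟨ρ, fun g => ?_⟩
  induction g using FreeGroup.induction_on with
  | C1 => exact ⟨0, by simp [eSum_one], by simp [eSum_one]⟩
  | of x => exact ⟨fun i => if i = 0 then s x else 0, by simp [eSum_of],
      fun q => by simp [ρ, wrPerm, eSum_of]⟩
  | inv_of x ih => exact hinv _ ih
  | mul a b ha hb =>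
    obtain ⟨f, hf, hq⟩ := ha
    obtain ⟨f', hf', hq'⟩ := hb
    refine ⟨fun i => f' i + f (i + eSum t b), ?_, fun q => ?_⟩
    · rw [eSum_mul, ← hf, ← hf', Finset.sum_add_distrib, add_comm]
      congr 1
      exact Equiv.sum_comp (Equiv.addRight (eSum t b)) f
    · rw [map_mul, Equiv.Perm.mul_apply, hq', hq, eSum_mul]
      ext <;> simp <;> ring

theorem sum_range_zmod {p : ℕ} [NeZero p] (F : ZMod p → ZMod p) :
    ∑ j ∈ Finset.range p, F (j : ZMod p) = ∑ i, F i := by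
  refine Finset.sum_nbij' (fun j => (j : ZMod p)) (fun i => i.val) ?_ ?_ ?_ ?_ ?_
  · simp
  · intro i _; simpa using ZMod.val_lt i
  · intro j hj; exact ZMod.val_cast_of_lt (by simpa using hj)
  · intro i _; simp
  · simp

theorem key {X : Type} {p : ℕ} [Fact p.Prime] (t s : X → ZMod p) (a b c : FreeGroup X)
    (h : a ^ p * b ^ p = c ^ p) :
    (if eSum t a = 0 then 0 else eSum s a) + (if eSum t b = 0 then 0 else eSum s b)
      = (if eSum t c = 0 then 0 else eSum s c) := by
  obtain ⟨ρ, hρ⟩ := wr_rep t s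
  have hpow : ∀ g q, ρ (g ^ p) q = (q.1, q.2 + (if eSum t g = 0 then 0 else eSum s g)) := by
    intro g q
    obtain ⟨f, hf, hq⟩ := hρ g
    have hn : ∀ n : ℕ, ρ (g ^ n) q = (q.1 + n * eSum t g,
        q.2 + ∑ j ∈ Finset.range n, f (q.1 + j * eSum t g)) := by
      intro n
      induction n with
      | zero => simp
      | succ n ih =>
        rw [pow_succ', map_mul, Equiv.Perm.mul_apply, ih, hq, Finset.sum_range_succ]
        ext <;> simp <;> ring
    rw [hn p]
    ext
    · simp
    · simp only [add_right_inj]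
      split_ifs with h0
      · simp [h0]
      · rw [sum_range_zmod (fun j => f (q.1 + j * eSum t g)), ← hf]
        exact Equiv.sum_comp ((Equiv.mulRight₀ (eSum t g) h0).trans (Equiv.addLeft q.1)) f
  have := congrArg (fun g => (ρ g (0, 0)).2) h
  simp only [map_mul, Equiv.Perm.mul_apply, hpow] at this
  linear_combination this

theorem subsing {X : Type} {p : ℕ} [Fact p.Prime] (a b c : FreeGroup X)
    (h : a ^ p * b ^ p = c ^ p) (hgen : Subgroup.closure {a, b, c} = ⊤) : Subsingleton X := by
  classical
  refine ⟨fun x y => by_contra fun hxy => ?_⟩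
  have hadd : ∀ t : X → ZMod p, eSum t c = eSum t a + eSum t b := by
    intro t
    have := key t t a b c h
    have e : ∀ v : ZMod p, (if v = 0 then 0 else v) = v := by intro v; split_ifs <;> simp_all
    rw [e, e, e] at this
    exact this.symm
  let X1 : X → ZMod p := fun i => if i = x then 1 else 0
  let X2 : X → ZMod p := fun i => if i = y then 1 else 0
  -- a functional killing `a, b` is zero
  have hkill : ∀ c1 c2 : ZMod p, c1 * eSum X1 a + c2 * eSum X2 a = 0 →
      c1 * eSum X1 b + c2 * eSum X2 b = 0 → c1 = 0 ∧ c2 = 0 := by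
    intro c1 c2 ha hb
    have hall : expSum (fun i => c1 * X1 i + c2 * X2 i) = 1 := by
      apply MonoidHom.eq_of_eqOn_dense hgen
      have ha' := eSum_lin X1 X2 c1 c2 a
      have hb' := eSum_lin X1 X2 c1 c2 b
      have hc' := hadd (fun i => c1 * X1 i + c2 * X2 i)
      rw [ha] at ha'
      rw [hb] at hb'
      rw [ha', hb', add_zero] at hc'
      rintro g (rfl | rfl | rfl)
      · exact ha'
      · exact hb'
      · exact hc'
    have h0 : ∀ g, eSum (fun i => c1 * X1 i + c2 * X2 i) g = 0 := by
      intro g; simp [eSum, hall]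
    have h1 := h0 (FreeGroup.of x)
    have h2 := h0 (FreeGroup.of y)
    rw [eSum_of] at h1 h2
    have hyx : ¬ y = x := fun e => hxy e.symm
    simp [X1, X2, hxy] at h1
    simp [X1, X2, hyx] at h2
    exact ⟨h1, h2⟩
  have hD : eSum X2 b * eSum X1 a - eSum X1 b * eSum X2 a = 0 := by
    by_contra hD
    have := key (fun i => eSum X2 b * X1 i + (- eSum X1 b) * X2 i)
      (fun i => eSum X2 a * X1 i + (- eSum X1 a) * X2 i) a b c h
    rw [hadd, hadd] at this
    simp only [eSum_lin] at this
    have e1 : eSum X2 b * eSum X1 b + (- eSum X1 b) * eSum X2 b = 0 := by ring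
    have e2 : eSum X2 a * eSum X1 a + (- eSum X1 a) * eSum X2 a = 0 := by ring
    have e3 : eSum X2 b * eSum X1 a + (- eSum X1 b) * eSum X2 a ≠ 0 := by
      intro h; apply hD; rw [← h]; ring
    rw [e1, e2] at this
    simp only [add_zero, if_true, if_neg e3, zero_add] at this
    apply e3
    linear_combination this
  have h1 := hkill (eSum X2 a) (- eSum X1 a) (by ring) (by linear_combination - hD)
  have h2 := hkill (eSum X2 b) (- eSum X1 b) (by linear_combination hD) (by ring)
  have h3 := hkill 1 0 (by simpa using h1.2) (by simpa using h2.2)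
  exact one_ne_zero h3.1

theorem comm_of_subsing {X : Type} [Subsingleton X] (a b : FreeGroup X) : Commute a b := by
  have h1 : ∀ (x : X) (b : FreeGroup X), Commute (FreeGroup.of x) b := by
    intro x b
    induction b using FreeGroup.induction_on with
    | C1 => exact Commute.one_right _
    | of y => rw [Subsingleton.elim x y]
    | inv_of y ih => exact ih.inv_right
    | mul _ _ h h' => exact h.mul_right h'
  induction a using FreeGroup.induction_on with
  | C1 => exact Commute.one_left _
  | of y => exact h1 y b
  | inv_of y ih => exact ih.inv_left
  | mul _ _ h h' => exact h.mul_left h'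

theorem fermat_same {α : Type} {p : ℕ} [Fact p.Prime] (a b c : FreeGroup α)
    (h : a ^ p * b ^ p = c ^ p) : Commute a b := by
  let H : Subgroup (FreeGroup α) := Subgroup.closure {a, b, c}
  have ma : a ∈ H := Subgroup.subset_closure (by simp)
  have mb : b ∈ H := Subgroup.subset_closure (by simp)
  have mc : c ∈ H := Subgroup.subset_closure (by simp)
  let e := IsFreeGroup.toFreeGroup H
  have hH : (⟨a, ma⟩ : H) ^ p * ⟨b, mb⟩ ^ p = ⟨c, mc⟩ ^ p := Subtype.ext h
  have hE : e ⟨a, ma⟩ ^ p * e ⟨b, mb⟩ ^ p = e ⟨c, mc⟩ ^ p := by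
    rw [← map_pow, ← map_pow, ← map_pow, ← map_mul, hH]
  have hcl : Subgroup.closure ({⟨a, ma⟩, ⟨b, mb⟩, ⟨c, mc⟩} : Set H) = ⊤ := by
    have := Subgroup.closure_closure_coe_preimage (k := ({a, b, c} : Set (FreeGroup α)))
    rw [← this]
    congr 1
    ext ⟨g, hg⟩
    simp
  have hgen : Subgroup.closure {e ⟨a, ma⟩, e ⟨b, mb⟩, e ⟨c, mc⟩} = ⊤ := by
    have := congrArg (Subgroup.map e.toMonoidHom) hcl
    rw [MonoidHom.map_closure, Subgroup.map_top_of_surjective _ e.surjective] at this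
    rw [← this]
    congr 1
    simp [Set.image_insert_eq]
  have := subsing _ _ _ hE hgen
  have hc := comm_of_subsing (e ⟨a, ma⟩) (e ⟨b, mb⟩)
  have hc2 : (⟨a, ma⟩ : H) * ⟨b, mb⟩ = ⟨b, mb⟩ * ⟨a, ma⟩ := by
    apply e.injective
    rw [map_mul, map_mul]
    exact hc
  exact congrArg Subtype.val hc2


/-- **Lyndon–Schützenberger-type theorem in free groups.**  If `w, z, u` are elements of a
free group, `p` is a prime, `l ≥ 1`, and the "Fermat equality" `w^{p^l} · z^p = u^p` holds,
then `z` commutes with `w`.  Equivalently, if `z` and `w` do not commute, then `w^{p^l} · z^p`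
is not a `p`-th power. -/
theorem fermat_equality_free_group
    (α : Type) (p l : ℕ) (hp : p.Prime) (hl : 1 ≤ l)
    (w z u : FreeGroup α) (h : w ^ p ^ l * z ^ p = u ^ p) :
    Commute z w := by
  have := Fact.mk hp
  obtain ⟨k, rfl⟩ : ∃ k, l = k + 1 := ⟨l - 1, by omega⟩
  rw [pow_succ, pow_mul] at h
  have hc := fermat_same _ _ _ h
  have hn : p ^ k ≠ 0 := pow_ne_zero _ hp.ne_zero
  have h2 : z * w * z⁻¹ = w := by
    apply IsMulTorsionFree.pow_left_injective hn
    change (z * w * z⁻¹) ^ p ^ k = w ^ p ^ k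
    rw [conj_pow, ← hc.eq, mul_inv_cancel_right]
  exact mul_inv_eq_iff_eq_mul.mp h2
end
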